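/- Let η ∈ (0,1) and α > 1 be constants, set ξ := (1 − 1/α)/10, let p : ℕ → ℝ satisfy 0 < p(n) ≤ 1 − η and log(1/p(n))/log n → 0, and let h < 1 be a constant. For a partial coloring 𝒞 = (C_1, …, C_k) of a graph G on Fin n (a tuple of pairwise disjoint vertex sets), let A(v,𝒞) := {i ∈ {1,…,k} : N(v) ∩ C_i = ∅}, a(v,𝒞) := |A(v,𝒞)|, call a color i active if there exists an uncolored vertex v (i.e. v ∉ C_1 ∪ … ∪ C_k) with i ∈ A(v,𝒞), let ℓ(𝒞) := min{|C_i| : i active}, and let B(h,𝒞) := {v ∈ V : a(v,𝒞) < β(h)/2}. Let ℰ_n be the event that the random graph G_{n,p(n)} admits a partial coloring 𝒞 with at least one active color such that ℓ(𝒞) ≤ (h − ξ)·log_b(np), |B(h,𝒞)| ≥ γ(h), and at least (ξ/10)·k of the color classes C_i satisfy |C_i| ≤ ℓ(𝒞) + ξ·log_b(np). Then the probability of ℰ_n tends to 0 as n → ∞. -/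

import Mathlib

open MeasureTheory Filter


abbrev EdgeIdx (n : ℕ) := {e : Sym2 (Fin n) // ¬ e.IsDiag}

noncomputable def bernoulliBool (p : ℝ) : Measure Bool :=
  ENNReal.ofReal p • Measure.dirac true + ENNReal.ofReal (1 - p) • Measure.dirac false

noncomputable def erMeasure (n : ℕ) (p : ℝ) : Measure (EdgeIdx n → Bool) :=
  Measure.pi fun _ => bernoulliBool p

def erGraph (n : ℕ) (ω : EdgeIdx n → Bool) : SimpleGraph (Fin n) where
  Adj u v := u ≠ v ∧ ∀ h : ¬ (s(u, v) : Sym2 (Fin n)).IsDiag, ω ⟨s(u, v), h⟩ = true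
  symm := by
    constructor
    rintro u v ⟨hne, h⟩
    refine ⟨hne.symm, fun hd => ?_⟩
    have hs : (s(v, u) : Sym2 (Fin n)) = s(u, v) := Sym2.eq_swap
    have hd' : ¬ (s(u, v) : Sym2 (Fin n)).IsDiag := by rw [← hs]; exact hd
    exact (congrArg ω (Subtype.ext hs)).trans (h hd')
  loopless := by constructor; rintro u ⟨h, -⟩; exact h rfl

/-- `log_b(np)` with `b = 1/(1-p)`. -/
noncomputable def logbNP (n : ℕ) (p : ℝ) : ℝ :=
  Real.log (n * p) / Real.log (1 / (1 - p))

/-- `β(h) = α·ξ·n·(np)^{-h} / (10·log_b(np))`. -/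
noncomputable def betaKS (α ξ h : ℝ) (n : ℕ) (p : ℝ) : ℝ :=
  α * ξ * n * ((n : ℝ) * p) ^ (-h) / (10 * logbNP n p)

/-- `γ(h) = 10·n·log n / β(h)`. -/
noncomputable def gammaKS (α ξ h : ℝ) (n : ℕ) (p : ℝ) : ℝ :=
  10 * n * Real.log n / betaKS α ξ h n p


open scoped ENNReal

instance bernoulliBool_sfinite (p : ℝ) : IsFiniteMeasure (bernoulliBool p) := by
  unfold bernoulliBool
  constructor
  simp

lemma bernoulliBool_prob {p : ℝ} (h0 : 0 ≤ p) (h1 : p ≤ 1) :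
    IsProbabilityMeasure (bernoulliBool p) := by
  constructor
  simp [bernoulliBool]
  rw [← ENNReal.ofReal_add h0 (by linarith)]
  simp

lemma bernoulliBool_false (p : ℝ) : bernoulliBool p {false} = ENNReal.ofReal (1 - p) := by
  simp [bernoulliBool]

open Classical in
noncomputable def wKS {ι : Type*} (E : Finset ι) (ω : ι → Bool) : ℝ≥0∞ :=
  if ∀ e ∈ E, ω e = false then ENNReal.ofReal (1/2) else 1

lemma measure_allFalse {ι : Type*} [Fintype ι] {p : ℝ} (h0 : 0 ≤ p) (h1 : p ≤ 1)
    (E : Finset ι) :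
    (Measure.pi fun _ : ι => bernoulliBool p) {ω | ∀ e ∈ E, ω e = false}
      = ENNReal.ofReal ((1 - p) ^ E.card) := by
  classical
  have := bernoulliBool_prob h0 h1
  have : {ω : ι → Bool | ∀ e ∈ E, ω e = false}
      = Set.pi Set.univ (fun e => if e ∈ E then {false} else Set.univ) := by
    ext ω
    simp only [Set.mem_ofPred_eq, Set.mem_pi, Set.mem_univ, true_imp_iff]
    refine forall_congr' fun e => ?_
    by_cases he : e ∈ E <;> simp [he]
  rw [this, Measure.pi_pi]
  have h2 : ∀ e : ι, bernoulliBool p (if e ∈ E then {false} else Set.univ)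
      = if e ∈ E then ENNReal.ofReal (1 - p) else 1 := by
    intro e
    by_cases he : e ∈ E
    · simp [he, bernoulliBool_false]
    · rw [if_neg he, if_neg he, measure_univ]
  rw [Finset.prod_congr rfl (fun e _ => h2 e), Finset.prod_ite_mem]
  simp [ENNReal.ofReal_pow (show 0 ≤ 1 - p by linarith)]

lemma lintegral_wKS {ι : Type*} [Fintype ι] {p : ℝ} (h0 : 0 ≤ p) (h1 : p ≤ 1)
    (E : Finset ι) {q : ℝ} (hq : q ≤ (1 - p) ^ E.card) :
    ∫⁻ ω, wKS E ω ∂(Measure.pi fun _ : ι => bernoulliBool p)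
      ≤ ENNReal.ofReal (Real.exp (- q / 2)) := by
  classical
  have := bernoulliBool_prob h0 h1
  have hA := measure_allFalse h0 h1 E
  set A : Set (ι → Bool) := {ω | ∀ e ∈ E, ω e = false} with hAdef
  have hm : MeasurableSet A := Set.Finite.measurableSet (Set.toFinite _)
  have hw : (wKS E : (ι → Bool) → ℝ≥0∞)
      = fun ω => A.indicator (fun _ => ENNReal.ofReal (1/2)) ω + Aᶜ.indicator (fun _ => 1) ω := by
    funext ω
    by_cases h : ω ∈ A
    · have h' : ∀ e ∈ E, ω e = false := h
      simp only [wKS, if_pos h', Set.indicator_of_mem h]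
      simp [h]
    · have h' : ¬ ∀ e ∈ E, ω e = false := h
      simp only [wKS, if_neg h', Set.indicator_of_notMem h]
      simp [h]
  rw [hw, lintegral_add_left (measurable_const.indicator hm), lintegral_indicator_const hm,
    lintegral_indicator_const hm.compl, prob_compl_eq_one_sub hm, hA, one_mul]
  have ha0 : 0 ≤ (1 - p) ^ E.card := pow_nonneg (by linarith) _
  have ha1 : (1 - p) ^ E.card ≤ 1 := pow_le_one₀ (by linarith) (by linarith)
  rw [← ENNReal.ofReal_one, ← ENNReal.ofReal_sub _ ha0, ← ENNReal.ofReal_mul (by norm_num),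
    ← ENNReal.ofReal_add (by positivity) (by linarith)]
  apply ENNReal.ofReal_le_ofReal
  have := Real.add_one_le_exp (-q/2)
  linarith

lemma lintegral_prod_wKS {ι J : Type*} [Fintype ι] {p : ℝ} (h0 : 0 ≤ p) (h1 : p ≤ 1)
    (E : J → Finset ι) {q : ℝ} (S : Finset J)
    (hd : ∀ i ∈ S, ∀ j ∈ S, i ≠ j → Disjoint (E i) (E j))
    (hq : ∀ j ∈ S, q ≤ (1 - p) ^ (E j).card) :
    ∫⁻ ω, ∏ j ∈ S, wKS (E j) ω ∂(Measure.pi fun _ : ι => bernoulliBool p)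
      ≤ ENNReal.ofReal (Real.exp (- q / 2)) ^ S.card := by
  classical
  have := bernoulliBool_prob h0 h1
  induction S using Finset.cons_induction with
  | empty => simp
  | cons j s hj ih =>
    have ih' := ih (fun a ha b hb => hd a (by simp [ha]) b (by simp [hb]))
      (fun a ha => hq a (by simp [ha]))
    simp only [Finset.prod_cons, Finset.card_cons]
    have hind : ProbabilityTheory.iIndepFun (fun (i : ι) (ω : ι → Bool) => ω i)
        (Measure.pi fun _ : ι => bernoulliBool p) :=
      ProbabilityTheory.iIndepFun_pi (X := fun _ b => b) (fun i => aemeasurable_id)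
    have hdis : Disjoint (E j) (s.biUnion E) := by
      rw [Finset.disjoint_biUnion_right]
      intro i hi
      exact hd j (by simp) i (by simp [hi]) (by rintro rfl; exact hj hi)
    have h2 := hind.indepFun_finset (E j) (s.biUnion E) hdis (fun i => measurable_pi_apply i)
    let F : ((E j) → Bool) → ℝ≥0∞ := fun x => if ∀ e, x e = false then ENNReal.ofReal (1/2) else 1
    let G : (↥(s.biUnion E) → Bool) → ℝ≥0∞ := fun x =>
      ∏ i ∈ s, if ∀ e, e.1 ∈ E i → x e = false then ENNReal.ofReal (1/2) else 1
    have h3 := h2.comp (φ := F) (ψ := G) (measurable_of_finite _) (measurable_of_finite _)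
    have hF : (F ∘ fun (a : ι → Bool) (i : E j) => a i) = wKS (E j) := by
      funext ω
      simp [F, wKS]
    have hG : (G ∘ fun (a : ι → Bool) (i : (s.biUnion E : Finset ι)) => a i)
        = fun ω => ∏ i ∈ s, wKS (E i) ω := by
      funext ω
      simp only [G, wKS, Function.comp]
      refine Finset.prod_congr rfl fun i hi => ?_
      congr 1
      apply propext
      constructor
      · intro H e he
        exact H ⟨e, Finset.mem_biUnion.2 ⟨i, hi, he⟩⟩ he
      · intro H e he
        exact H e he
    rw [hF, hG] at h3
    rw [ProbabilityTheory.lintegral_mul_eq_lintegral_mul_lintegral_of_indepFun''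
      (measurable_of_finite _).aemeasurable (measurable_of_finite _).aemeasurable h3, pow_succ']
    exact mul_le_mul' (lintegral_wKS h0 h1 _ (hq j (by simp))) ih'

open Classical in
noncomputable def starKS {n : ℕ} (v : Fin n) (C : Finset (Fin n)) : Finset (EdgeIdx n) :=
  Finset.univ.filter (fun e => ∃ u ∈ C, e.1 = s(v, u))

lemma card_starKS {n : ℕ} (v : Fin n) (C : Finset (Fin n)) : (starKS v C).card ≤ C.card := by
  classical
  calc (starKS v C).card = ((starKS v C).image Subtype.val).card :=
        (Finset.card_image_of_injective _ Subtype.val_injective).symm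
    _ ≤ (C.image (fun u => s(v, u))).card := by
        apply Finset.card_le_card
        intro e he
        simp only [starKS, Finset.mem_image, Finset.mem_filter, Finset.mem_univ, true_and] at he
        obtain ⟨a, ⟨u, hu, hau⟩, rfl⟩ := he
        exact Finset.mem_image.2 ⟨u, hu, hau.symm⟩
    _ ≤ C.card := Finset.card_image_le

lemma tailKS {n K : ℕ} {p : ℝ} (h0 : 0 ≤ p) (h1 : p ≤ 1) (C : Fin K → Finset (Fin n))
    (hC : ∀ i j, i ≠ j → Disjoint (C i) (C j)) (B : Finset (Fin n)) (D : Finset (Fin K))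
    (hBD : ∀ i ∈ D, Disjoint B (C i)) (q t : ℝ)
    (hq : ∀ i ∈ D, q ≤ (1 - p) ^ (C i).card) :
    erMeasure n p {ω | ∀ v ∈ B,
        (({i | ∀ u ∈ C i, ¬ (erGraph n ω).Adj v u}.ncard : ℕ) : ℝ) < t}
      ≤ ENNReal.ofReal (Real.exp (B.card * (t * Real.log 2 - D.card * q / 2))) := by
  classical
  have hb := bernoulliBool_prob h0 h1
  let E : Fin n × Fin K → Finset (EdgeIdx n) := fun x => starKS x.1 (C x.2)
  have hint := lintegral_prod_wKS (ι := EdgeIdx n) h0 h1 E (q := q) (B ×ˢ D) (by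
    rintro ⟨v, i⟩ hv ⟨v', i'⟩ hv' hne
    simp only [Finset.mem_product] at hv hv'
    rw [Finset.disjoint_left]
    intro e he he'
    simp only [E, starKS, Finset.mem_filter, Finset.mem_univ, true_and] at he he'
    obtain ⟨u, hu, heu⟩ := he
    obtain ⟨u', hu', heu'⟩ := he'
    rw [heu, Sym2.eq_iff] at heu'
    rcases heu' with ⟨rfl, rfl⟩ | ⟨rfl, rfl⟩
    · apply hne
      by_cases hi : i = i'
      · rw [hi]
      · exact absurd hu' (Finset.disjoint_left.1 (hC i i' hi) hu)
    · exact Finset.disjoint_left.1 (hBD i hv.2) hv'.1 hu) (by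
    rintro ⟨v, i⟩ hv
    simp only [Finset.mem_product] at hv
    refine (hq i hv.2).trans ?_
    exact pow_le_pow_of_le_one (by linarith) (by linarith) (card_starKS v (C i)))
  set ε : ℝ≥0∞ := ENNReal.ofReal (Real.exp (-(B.card * (t * Real.log 2)))) with hε
  have hε0 : ε ≠ 0 := by
    rw [hε]; simp [Real.exp_pos]
  have hsub : {ω | ∀ v ∈ B,
        (({i | ∀ u ∈ C i, ¬ (erGraph n ω).Adj v u}.ncard : ℕ) : ℝ) < t}
      ⊆ {ω | ε ≤ ∏ j ∈ B ×ˢ D, wKS (E j) ω} := by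
    intro ω hω
    simp only [Set.mem_ofPred_eq] at hω ⊢
    rw [Finset.prod_product]
    have hv : ∀ v ∈ B, ENNReal.ofReal (Real.exp (-(t * Real.log 2))) ≤ ∏ i ∈ D, wKS (E (v, i)) ω := by
      intro v hv
      have h3 : ∏ i ∈ D, wKS (E (v, i)) ω
          = ENNReal.ofReal (1/2) ^ (D.filter (fun i => ∀ e ∈ E (v, i), ω e = false)).card := by
        rw [← Finset.prod_const, Finset.prod_filter]
        refine Finset.prod_congr rfl fun i _ => ?_
        simp only [wKS]
        congr
      rw [h3, ← ENNReal.ofReal_pow (by norm_num)]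
      apply ENNReal.ofReal_le_ofReal
      set m := (D.filter (fun i => ∀ e ∈ E (v, i), ω e = false)).card with hm
      have hmt : (m : ℝ) ≤ t := by
        refine le_trans ?_ (hω v hv).le
        refine Nat.cast_le.2 ?_
        rw [hm, ← Set.ncard_coe_finset]
        apply Set.ncard_le_ncard _ (Set.toFinite _)
        intro i hi
        simp only [Finset.coe_filter, Set.mem_ofPred_eq] at hi ⊢
        intro u hu hadj
        obtain ⟨hne, hh⟩ := hadj
        have hnd : ¬ (s(v, u) : Sym2 (Fin n)).IsDiag := by simpa using hne
        have := hh hnd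
        rw [hi.2 ⟨s(v, u), hnd⟩ (by
          simp only [E, starKS, Finset.mem_filter, Finset.mem_univ, true_and]
          exact ⟨u, hu, rfl⟩)] at this
        exact Bool.noConfusion this
      have h12 : ((1:ℝ)/2) ^ m = Real.exp (-(m * Real.log 2)) := by
        rw [Real.exp_neg, mul_comm, Real.exp_mul, Real.exp_log (by norm_num)]
        simp
      rw [h12, Real.exp_le_exp]
      have := Real.log_pos (show (1:ℝ) < 2 by norm_num)
      nlinarith
    calc ε = ∏ v ∈ B, ENNReal.ofReal (Real.exp (-(t * Real.log 2))) := by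
          rw [Finset.prod_const, ← ENNReal.ofReal_pow (Real.exp_pos _).le, ← Real.exp_nat_mul, hε]
          congr 2; ring
      _ ≤ _ := Finset.prod_le_prod' hv
  refine (measure_mono hsub).trans ?_
  refine (meas_ge_le_lintegral_div (measurable_of_finite _).aemeasurable hε0
    ENNReal.ofReal_ne_top).trans ?_
  rw [ENNReal.div_le_iff hε0 ENNReal.ofReal_ne_top, hε,
    ← ENNReal.ofReal_mul (Real.exp_pos _).le, ← Real.exp_add]
  refine hint.trans ?_
  rw [← ENNReal.ofReal_pow (Real.exp_pos _).le, ← Real.exp_nat_mul, Finset.card_product]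
  apply le_of_eq
  congr 2
  push_cast
  ring

lemma unionKS {n K : ℕ} {p : ℝ} (h0 : 0 ≤ p) (h1 : p ≤ 1) (q t s γ M : ℝ) (hq0 : 0 ≤ q)
    (hs : ∀ m : ℕ, (m : ℝ) ≤ s → q ≤ (1 - p) ^ m) :
    erMeasure n p {ω | ∃ C : Fin K → Finset (Fin n), (∀ i j, i ≠ j → Disjoint (C i) (C j)) ∧
        γ ≤ (({v : Fin n | (({i | ∀ u ∈ C i, ¬ (erGraph n ω).Adj v u}.ncard : ℕ) : ℝ) < t}.ncard
          : ℕ) : ℝ) ∧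
        M ≤ (({i | ((C i).card : ℝ) ≤ s}.ncard : ℕ) : ℝ)}
      ≤ ((K + 1) ^ n * 2 ^ n : ℕ) *
        ENNReal.ofReal (Real.exp (⌈γ⌉₊ * (t * Real.log 2 - (M - ⌈γ⌉₊) * q / 2))) := by
  classical
  let Cc : (Fin n → Option (Fin K)) → Fin K → Finset (Fin n) :=
    fun c i => Finset.univ.filter (fun v => c v = some i)
  have hCc : ∀ c i j, i ≠ j → Disjoint (Cc c i) (Cc c j) := by
    intro c i j hij
    rw [Finset.disjoint_left]
    intro v hv hv'
    simp only [Cc, Finset.mem_filter, Finset.mem_univ, true_and] at hv hv'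
    rw [hv] at hv'
    exact hij (Option.some.inj hv')
  let Ev : (Fin n → Option (Fin K)) × Finset (Fin n) → Set (EdgeIdx n → Bool) := fun x =>
    {ω | x.2.card = ⌈γ⌉₊ ∧ M ≤ (({i | ((Cc x.1 i).card : ℝ) ≤ s}.ncard : ℕ) : ℝ) ∧
      ∀ v ∈ x.2, (({i | ∀ u ∈ Cc x.1 i, ¬ (erGraph n ω).Adj v u}.ncard : ℕ) : ℝ) < t}
  have hsub : {ω | ∃ C : Fin K → Finset (Fin n), (∀ i j, i ≠ j → Disjoint (C i) (C j)) ∧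
        γ ≤ (({v : Fin n | (({i | ∀ u ∈ C i, ¬ (erGraph n ω).Adj v u}.ncard : ℕ) : ℝ) < t}.ncard
          : ℕ) : ℝ) ∧
        M ≤ (({i | ((C i).card : ℝ) ≤ s}.ncard : ℕ) : ℝ)} ⊆ ⋃ x, Ev x := by
    rintro ω ⟨C, hC, hγ, hM⟩
    let c : Fin n → Option (Fin K) := fun v =>
      if h : ∃ i, v ∈ C i then some h.choose else none
    have hcC : Cc c = C := by
      funext i
      ext v
      simp only [Cc, Finset.mem_filter, Finset.mem_univ, true_and, c]
      constructor
      · intro h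
        split_ifs at h with h'
        have := h'.choose_spec
        rwa [Option.some.inj h] at this
      · intro h
        have h' : ∃ i, v ∈ C i := ⟨i, h⟩
        rw [dif_pos h']
        congr 1
        by_contra hne
        exact Finset.disjoint_left.1 (hC _ _ hne) h'.choose_spec h
    rw [Set.ncard_eq_toFinset_card'] at hγ
    obtain ⟨B, hB, hBc⟩ := Finset.exists_subset_card_eq (Nat.ceil_le.2 hγ)
    rw [Set.mem_iUnion]
    refine ⟨(c, B), hBc, ?_, ?_⟩
    · simp only [hcC]; exact hM
    · simp only [hcC]
      intro v hv
      have := hB hv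
      rw [Set.mem_toFinset] at this
      exact this
  have hEv : ∀ x, erMeasure n p (Ev x) ≤
      ENNReal.ofReal (Real.exp (⌈γ⌉₊ * (t * Real.log 2 - (M - ⌈γ⌉₊) * q / 2))) := by
    rintro ⟨c, B⟩
    by_cases hB : B.card = ⌈γ⌉₊ ∧ M ≤ (({i | ((Cc c i).card : ℝ) ≤ s}.ncard : ℕ) : ℝ)
    swap
    · have : Ev (c, B) = ∅ := by
        apply Set.eq_empty_of_forall_notMem
        rintro ω ⟨ha, hb, -⟩
        exact hB ⟨ha, hb⟩
      rw [this]; simp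
    obtain ⟨hB, hM⟩ := hB
    let D0 : Finset (Fin K) := Finset.univ.filter (fun i => ((Cc c i).card : ℝ) ≤ s)
    let D1 : Finset (Fin K) := B.biUnion (fun v => (c v).toFinset)
    have hD0 : M ≤ D0.card := by
      refine hM.trans ?_
      rw [← Set.ncard_coe_finset D0]
      simp [D0]
    have hD1 : D1.card ≤ ⌈γ⌉₊ := by
      rw [← hB, ← mul_one B.card]
      apply Finset.card_biUnion_le_card_mul
      intro v _
      cases c v <;> simp
    have hD : M - ⌈γ⌉₊ ≤ (D0 \ D1).card := by
      have h1 := Finset.le_card_sdiff D1 D0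
      have h2 : D0.card ≤ (D0 \ D1).card + ⌈γ⌉₊ := by omega
      have h3 : (D0.card : ℝ) ≤ (D0 \ D1).card + ⌈γ⌉₊ := by exact_mod_cast h2
      linarith
    have ht := tailKS h0 h1 (Cc c) (hCc c) B (D0 \ D1) (by
      intro i hi
      rw [Finset.disjoint_left]
      intro v hv hvi
      simp only [Cc, Finset.mem_filter, Finset.mem_univ, true_and] at hvi
      exact (Finset.mem_sdiff.1 hi).2 (Finset.mem_biUnion.2 ⟨v, hv, by simp [hvi]⟩)) q t (by
      intro i hi
      have := (Finset.mem_sdiff.1 hi).1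
      simp only [D0, Finset.mem_filter, Finset.mem_univ, true_and] at this
      exact hs _ this)
    refine (measure_mono ?_).trans (ht.trans ?_)
    · rintro ω ⟨-, -, h⟩
      exact h
    · apply ENNReal.ofReal_le_ofReal
      rw [Real.exp_le_exp, hB]
      apply mul_le_mul_of_nonneg_left _ (Nat.cast_nonneg _)
      have := mul_le_mul_of_nonneg_right hD hq0
      linarith
  refine (measure_mono hsub).trans ((measure_iUnion_fintype_le _ _).trans ?_)
  refine (Finset.sum_le_sum fun x _ => hEv x).trans ?_
  rw [Finset.sum_const, nsmul_eq_mul]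
  apply le_of_eq
  congr 2
  simp [Finset.card_univ, Fintype.card_prod]

lemma logbNP_pos {n : ℕ} {P : ℝ} (h1 : P < 1) (h0 : 0 < P) (hNP : 1 < n * P) :
    0 < logbNP n P := by
  unfold logbNP
  apply div_pos (Real.log_pos hNP)
  apply Real.log_pos
  rw [lt_div_iff₀ (by linarith)]
  linarith

lemma logbNP_le {n : ℕ} {P : ℝ} (h1 : P < 1) (h0 : 0 < P) (hNP : 1 < n * P) :
    logbNP n P ≤ Real.log n / P := by
  unfold logbNP
  have hn : (0:ℝ) < n := by
    by_contra hcon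
    nlinarith
  apply div_le_div₀
  · apply Real.log_nonneg
    nlinarith
  · apply Real.log_le_log (by linarith)
    nlinarith
  · exact h0
  · rw [one_div, Real.log_inv]
    have := Real.log_le_sub_one_of_pos (show 0 < 1 - P by linarith)
    linarith

lemma pow_ge_KS {n : ℕ} {P h : ℝ} (h1 : P < 1) (h0 : 0 < P) (hNP : 1 < n * P) (m : ℕ)
    (hm : (m : ℝ) ≤ h * logbNP n P) : ((n : ℝ) * P) ^ (-h) ≤ (1 - P) ^ m := by
  have hl : 0 < Real.log (1 / (1 - P)) := by
    apply Real.log_pos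
    rw [lt_div_iff₀ (by linarith)]
    linarith
  have hm' : m * Real.log (1 / (1 - P)) ≤ h * Real.log (n * P) := by
    unfold logbNP at hm
    calc m * Real.log (1 / (1 - P)) ≤ (h * (Real.log (n * P) / Real.log (1 / (1 - P))))
          * Real.log (1 / (1 - P)) := mul_le_mul_of_nonneg_right hm hl.le
      _ = _ := by field_simp
  rw [one_div, Real.log_inv] at hm'
  rw [Real.rpow_def_of_pos (by linarith), ← Real.rpow_natCast,
    Real.rpow_def_of_pos (by linarith), Real.exp_le_exp]
  linarith

/-- The numerical heart of the argument. -/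
lemma numKS {N P L ξ α h ε : ℝ} (hN : 20 ≤ N) (hlog : 5 ≤ Real.log N) (hP0 : 0 < P) (hP1 : P < 1)
    (hξ : 0 < ξ) (hα : 0 < α) (hh0 : 0 < h) (hε : 4 * ε = 1 - h)
    (hPε : N ^ (-ε) ≤ P) (hNP : 1 < N * P)
    (hL0 : 0 < L) (hL : L ≤ Real.log N / P)
    (hd : 2000 * Real.log N ^ 3 ≤ (ξ * α / 10) ^ 2 * N ^ (2 * ε)) (β γ M : ℝ)
    (hM : M = (ξ / 10) * (α * N / L))
    (hβ : β = α * ξ * N * (N * P) ^ (-h) / (10 * L))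
    (hγ : γ = 10 * N * Real.log N / β) :
    (⌈γ⌉₊ : ℝ) * (β / 2 * Real.log 2 - (M - ⌈γ⌉₊) * (N * P) ^ (-h) / 2)
      ≤ - (1.4 * (N * Real.log N)) := by
  have hN0 : 0 < N := by linarith
  set q := (N * P) ^ (-h) with hq
  have hq0 : 0 < q := Real.rpow_pos_of_pos (by linarith) _
  have hqN : N ^ (-h) ≤ q := by
    apply Real.rpow_le_rpow_of_nonpos (by linarith) (by nlinarith) (by linarith)
  have hβM : β = M * q := by
    rw [hβ, hM]; field_simp
  have hM0 : 0 < M := by rw [hM]; positivity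
  have hlog0 : 0 < Real.log N := by linarith
  have hβ0 : 0 < β := by rw [hβM]; positivity
  have hγβ : γ * β = 10 * (N * Real.log N) := by rw [hγ]; field_simp
  have hγ0 : 0 < γ := by rw [hγ]; positivity
  -- lower bound on M
  have hMlow : (ξ * α / 10) * N ^ (1 - ε) ≤ M * Real.log N := by
    have e1 : N ^ (1 - ε) ≤ N * P := by
      rw [show (1 - ε) = 1 + (-ε) by ring, Real.rpow_add hN0, Real.rpow_one]
      exact mul_le_mul_of_nonneg_left hPε hN0.le
    have e2 : N * P * L ≤ N * Real.log N := by
      have := (le_div_iff₀ hP0).1 hL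
      nlinarith
    have e3 : M * L = (ξ * α / 10) * N := by rw [hM]; field_simp
    have hc : 0 < ξ * α / 10 := by positivity
    have e4 : N ^ (1 - ε) * L ≤ N * Real.log N := (mul_le_mul_of_nonneg_right e1 hL0.le).trans e2
    have e5 : (ξ * α / 10) * N ^ (1 - ε) * L ≤ M * Real.log N * L := by
      calc (ξ * α / 10) * N ^ (1 - ε) * L = (ξ * α / 10) * (N ^ (1 - ε) * L) := by ring
        _ ≤ (ξ * α / 10) * (N * Real.log N) := mul_le_mul_of_nonneg_left e4 hc.le
        _ = M * L * Real.log N := by rw [e3]; ring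
        _ = _ := by ring
    exact le_of_mul_le_mul_right e5 hL0
  have hM2 : 2000 * (N * N ^ h) * Real.log N ≤ M ^ 2 := by
    have e1 : ((ξ * α / 10) * N ^ (1 - ε)) ^ 2 ≤ (M * Real.log N) ^ 2 :=
      pow_le_pow_left₀ (by positivity) hMlow 2
    have e2 : (N ^ (1 - ε)) ^ 2 = N * N ^ h * N ^ (2 * ε) := by
      rw [← Real.rpow_natCast, ← Real.rpow_mul hN0.le]
      nth_rewrite 2 [← Real.rpow_one N]
      rw [← Real.rpow_add hN0, ← Real.rpow_add hN0]
      congr 1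
      push_cast
      linarith
    have hNh : 0 < N * N ^ h := by positivity
    have e3 : 2000 * (N * N ^ h) * Real.log N * Real.log N ^ 2 ≤ M ^ 2 * Real.log N ^ 2 := by
      calc 2000 * (N * N ^ h) * Real.log N * Real.log N ^ 2
          = (N * N ^ h) * (2000 * Real.log N ^ 3) := by ring
        _ ≤ (N * N ^ h) * ((ξ * α / 10) ^ 2 * N ^ (2 * ε)) :=
            mul_le_mul_of_nonneg_left hd hNh.le
        _ = ((ξ * α / 10) * N ^ (1 - ε)) ^ 2 := by rw [mul_pow, e2]; ring
        _ ≤ _ := e1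
        _ = _ := by ring
    exact le_of_mul_le_mul_right e3 (by positivity)
  have hNh1 : 1 ≤ N ^ h := Real.one_le_rpow (by linarith) hh0.le
  have hM200 : 200 ≤ M := by
    have e1 : 20 * 5 ≤ (N * N ^ h) * Real.log N :=
      mul_le_mul (by nlinarith) hlog (by norm_num) (by positivity)
    nlinarith
  have hγM : γ ≤ M / 200 := by
    have e1 : 1 ≤ q * N ^ h := by
      calc (1:ℝ) = N ^ (-h) * N ^ h := by rw [← Real.rpow_add hN0]; simp
        _ ≤ _ := mul_le_mul_of_nonneg_right hqN (by positivity)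
    rw [hγ, div_le_iff₀ hβ0, hβM]
    have e2 : 10 * N * Real.log N ≤ (10 * N * Real.log N) * (q * N ^ h) :=
      le_mul_of_one_le_right (by positivity) e1
    have e3 : q * (2000 * (N * N ^ h) * Real.log N) ≤ q * M ^ 2 :=
      mul_le_mul_of_nonneg_left hM2 hq0.le
    linarith
  set g : ℝ := (⌈γ⌉₊ : ℝ) with hg
  have hg1 : γ ≤ g := Nat.le_ceil γ
  have hg2 : g < γ + 1 := Nat.ceil_lt_add_one hγ0.le
  have hg3 : g ≤ M / 100 := by linarith
  have hlog2 := Real.log_two_lt_d9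
  have e1 : β / 2 * Real.log 2 - (M - g) * q / 2 ≤ - (0.14 * β) := by
    have : g * q ≤ M / 100 * q := mul_le_mul_of_nonneg_right hg3 hq0.le
    have h5 : β * Real.log 2 ≤ β * 0.6931471808 := mul_le_mul_of_nonneg_left hlog2.le hβ0.le
    have h6 : (M - g) * q = β - g * q := by rw [hβM]; ring
    have h7 : M / 100 * q = β / 100 := by rw [hβM]; ring
    rw [h6]
    rw [h7] at this
    linarith
  have hg0 : 0 < g := by linarith
  have e2 := mul_le_mul_of_nonneg_left e1 hg0.le
  have e3 : γ * β ≤ g * β := mul_le_mul_of_nonneg_right hg1 hβ0.le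
  linarith

lemma countKS {n K : ℕ} (hK : K + 1 ≤ n) (hlog : 5 ≤ Real.log n) {x : ℝ}
    (hx : x ≤ - (1.4 * (n * Real.log n))) :
    (((K + 1) ^ n * 2 ^ n : ℕ) : ℝ≥0∞) * ENNReal.ofReal (Real.exp x)
      ≤ ENNReal.ofReal (Real.exp (-(n:ℝ))) := by
  have hn0 : (0:ℝ) < n := by
    have : 0 < n := by omega
    exact_mod_cast this
  rw [← ENNReal.ofReal_natCast, ← ENNReal.ofReal_mul (by positivity)]
  apply ENNReal.ofReal_le_ofReal
  have h1 : (((K + 1) ^ n * 2 ^ n : ℕ) : ℝ) ≤ Real.exp (n * Real.log n + n * Real.log 2) := by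
    rw [Real.exp_add, Real.exp_nat_mul, Real.exp_nat_mul, Real.exp_log hn0,
      Real.exp_log (by norm_num)]
    push_cast
    have : (K:ℝ) + 1 ≤ n := by exact_mod_cast hK
    gcongr
  refine (mul_le_mul_of_nonneg_right h1 (Real.exp_pos _).le).trans ?_
  rw [← Real.exp_add, Real.exp_le_exp]
  have hlog2 := Real.log_two_lt_d9
  have e1 : n * Real.log 2 ≤ n * 0.7 := mul_le_mul_of_nonneg_left (by linarith) hn0.le
  have e2 : (n:ℝ) * 5 ≤ n * Real.log n := mul_le_mul_of_nonneg_left hlog hn0.le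
  linarith

lemma eventually_pKS {p : ℕ → ℝ} (hp0 : ∀ n, 0 < p n)
    (hpbig : Tendsto (fun n => Real.log (1 / p n) / Real.log n) atTop (nhds 0))
    {ε : ℝ} (hε : 0 < ε) : ∀ᶠ n : ℕ in atTop, (n : ℝ) ^ (-ε) ≤ p n := by
  filter_upwards [hpbig.eventually (gt_mem_nhds hε), eventually_ge_atTop 2] with n hn hn2
  have hn2' : (2:ℝ) ≤ n := by exact_mod_cast hn2
  have hlog : 0 < Real.log n := Real.log_pos (by linarith)
  rw [div_lt_iff₀ hlog, one_div, Real.log_inv] at hn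
  rw [Real.rpow_def_of_pos (by linarith), ← Real.le_log_iff_exp_le (hp0 n)]
  linarith

lemma rpow_le_npKS {n : ℕ} (hn : 2 ≤ n) {P ε : ℝ} (hP : (n : ℝ) ^ (-ε) ≤ P) :
    (n : ℝ) ^ (1 - ε) ≤ n * P := by
  have hn2' : (2:ℝ) ≤ n := by exact_mod_cast hn
  rw [show (1 - ε) = 1 + (-ε) by ring, Real.rpow_add (by linarith), Real.rpow_one]
  exact mul_le_mul_of_nonneg_left hP (by linarith)

lemma tendsto_log_natKS : Tendsto (fun n : ℕ => Real.log n) atTop atTop :=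
  Real.tendsto_log_atTop.comp tendsto_natCast_atTop_atTop

lemma eventually_LKS {η : ℝ} (hη0 : 0 < η) (hη1 : η < 1) {p : ℕ → ℝ} (hp0 : ∀ n, 0 < p n)
    (hp1 : ∀ n, p n ≤ 1 - η) {ε : ℝ} (hε1 : ε < 1)
    (hpε : ∀ᶠ n : ℕ in atTop, (n : ℝ) ^ (-ε) ≤ p n) (A : ℝ) :
    ∀ᶠ n : ℕ in atTop, A ≤ logbNP n (p n) := by
  have hη : 0 < Real.log (1 / η) := by
    apply Real.log_pos
    rw [lt_div_iff₀ hη0]; linarith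
  have ht : Tendsto (fun n : ℕ => (1 - ε) / Real.log (1 / η) * Real.log n) atTop atTop :=
    tendsto_log_natKS.const_mul_atTop (div_pos (by linarith) hη)
  filter_upwards [hpε, ht.eventually_ge_atTop A, eventually_ge_atTop 2] with n hn hA hn2
  refine hA.trans ?_
  have hn2' : (2:ℝ) ≤ n := by exact_mod_cast hn2
  have h1 := rpow_le_npKS hn2 hn
  have h2 : (1 - ε) * Real.log n ≤ Real.log (n * p n) := by
    rw [← Real.log_rpow (by linarith)]
    exact Real.log_le_log (Real.rpow_pos_of_pos (by linarith) _) h1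
  have hp := hp1 n
  have hp' := hp0 n
  have hlog : 0 < Real.log n := Real.log_pos (by linarith)
  unfold logbNP
  calc (1 - ε) / Real.log (1 / η) * Real.log n = ((1 - ε) * Real.log n) / Real.log (1 / η) := by
        ring
    _ ≤ Real.log (n * p n) / Real.log (1 / (1 - p n)) := by
        apply div_le_div₀ _ h2
        · apply Real.log_pos
          rw [lt_div_iff₀ (by linarith)]; linarith
        · apply Real.log_le_log
          · apply one_div_pos.2; linarith
          · apply one_div_le_one_div_of_le hη0; linarith
        · exact le_trans (mul_nonneg (by linarith) hlog.le) h2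

/-- Lemma 8, `l:sudakov`, of Keusch–Steger. With high
probability there is no partial coloring `𝒞` with small level
`ℓ(𝒞) ≤ (h-ξ)·log_b(np)`, many dangerous vertices (`|B(h,𝒞)| ≥ γ(h)`), and at
least `(ξ/10)·k` color classes of size at most `ℓ(𝒞) + ξ·log_b(np)`. -/
theorem dangerous_vertices_event_whp
    (η : ℝ) (hη0 : 0 < η) (hη1 : η < 1)
    (α : ℝ) (hα : 1 < α) (ξ : ℝ) (hξ : ξ = (1 - 1 / α) / 10)
    (h : ℝ) (hh : h < 1)
    (p : ℕ → ℝ) (hp0 : ∀ n, 0 < p n) (hp1 : ∀ n, p n ≤ 1 - η)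
    (hpbig : Tendsto (fun n => Real.log (1 / p n) / Real.log n) atTop (nhds 0)) :
    Tendsto (fun n =>
        erMeasure n (p n) {ω : EdgeIdx n → Bool |
          -- a partial coloring with `k = α·n/log_b(np)` colors: pairwise
          -- disjoint (possibly empty) color classes
          ∃ C : Fin ⌈α * n / logbNP n (p n)⌉₊ → Finset (Fin n),
            (∀ i j, i ≠ j → Disjoint (C i) (C j)) ∧
            -- `ℓ` is the minimum size of an active color class
            -- (a color `i` is active iff some uncolored `v` has no neighbor in `C i`)
            ∃ ℓ : ℕ,
              (∃ i, (∃ v : Fin n, (∀ j, v ∉ C j) ∧ ∀ u ∈ C i, ¬ (erGraph n ω).Adj v u) ∧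
                (C i).card = ℓ) ∧
              (∀ i, (∃ v : Fin n, (∀ j, v ∉ C j) ∧ ∀ u ∈ C i, ¬ (erGraph n ω).Adj v u) →
                ℓ ≤ (C i).card) ∧
              -- the level is small
              (ℓ : ℝ) ≤ (h - ξ) * logbNP n (p n) ∧
              -- many dangerous vertices: `a(v,𝒞) < β(h)/2` for at least `γ(h)` vertices
              gammaKS α ξ h n (p n) ≤
                (({v : Fin n |
                    (({i | ∀ u ∈ C i, ¬ (erGraph n ω).Adj v u}.ncard : ℕ) : ℝ) <
                      betaKS α ξ h n (p n) / 2}.ncard : ℕ) : ℝ) ∧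
              -- at least `(ξ/10)·k` color classes have size at most `ℓ + ξ·log_b(np)`
              (ξ / 10) * (α * n / logbNP n (p n)) ≤
                (({i | ((C i).card : ℝ) ≤ (ℓ : ℝ) + ξ * logbNP n (p n)}.ncard : ℕ) : ℝ)})
      atTop (nhds 0) := by

  have hα0 : 0 < α := by linarith
  have hξ0 : 0 < ξ := by
    rw [hξ]
    have : 1 / α < 1 := by rw [div_lt_one hα0]; exact hα
    linarith
  rcases le_or_gt h 0 with hh0 | hh0
  · -- the level would be negative
    have hL := eventually_LKS hη0 hη1 hp0 hp1 (ε := 1/2) (by norm_num)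
      (eventually_pKS hp0 hpbig (by norm_num)) 1
    refine tendsto_const_nhds.congr' ?_
    filter_upwards [hL] with n hL
    symm
    convert measure_empty (μ := erMeasure n (p n))
    apply Set.eq_empty_of_forall_notMem
    rintro ω ⟨C, -, ℓ, -, -, hℓ, -⟩
    have : (0:ℝ) ≤ ℓ := Nat.cast_nonneg _
    nlinarith
  set ε : ℝ := (1 - h) / 4 with hε
  have hε0 : 0 < ε := by rw [hε]; linarith
  have hε1 : ε < 1 := by rw [hε]; linarith
  have hpε := eventually_pKS hp0 hpbig hε0
  have hLev := eventually_LKS hη0 hη1 hp0 hp1 hε1 hpε (2 * α)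
  have hdev : ∀ᶠ n : ℕ in atTop,
      2000 * Real.log n ^ 3 ≤ (ξ * α / 10) ^ 2 * (n : ℝ) ^ (2 * ε) := by
    have hlo := isLittleO_log_rpow_rpow_atTop (s := 2 * ε) 3 (by linarith)
    have hb := (hlo.bound (show 0 < (ξ * α / 10) ^ 2 / 2000 by positivity))
    filter_upwards [tendsto_natCast_atTop_atTop.eventually hb, eventually_ge_atTop 2] with n hn hn2
    have hn2' : (2:ℝ) ≤ n := by exact_mod_cast hn2
    have hlog : 0 < Real.log n := Real.log_pos (by linarith)
    rw [Real.norm_of_nonneg (by positivity), Real.norm_of_nonneg (by positivity)] at hn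
    have : Real.log n ^ (3:ℝ) = Real.log n ^ 3 := by
      rw [← Real.rpow_natCast]; norm_num
    rw [this] at hn
    linarith
  have hlim : Tendsto (fun n : ℕ => ENNReal.ofReal (Real.exp (-(n:ℝ)))) atTop (nhds 0) := by
    rw [← ENNReal.ofReal_zero]
    apply ENNReal.tendsto_ofReal
    exact Real.tendsto_exp_neg_atTop_nhds_zero.comp tendsto_natCast_atTop_atTop
  refine tendsto_of_tendsto_of_tendsto_of_le_of_le' tendsto_const_nhds hlim
    (Eventually.of_forall fun _ => zero_le) ?_
  filter_upwards [hpε, hLev, hdev, eventually_ge_atTop 20,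
    tendsto_log_natKS.eventually_ge_atTop 5] with n hPε hL hd hn hlog
  have hnR : (20:ℝ) ≤ n := by exact_mod_cast hn
  have hP0 := hp0 n
  have hP1 : p n < 1 := by have := hp1 n; linarith
  have hNP : 1 < n * p n := by
    refine lt_of_lt_of_le ?_ (rpow_le_npKS (by omega) hPε)
    exact Real.one_lt_rpow (by linarith) (by linarith)
  have hL0 : 0 < logbNP n (p n) := logbNP_pos hP1 hP0 hNP
  have hnum := numKS hnR hlog hP0 hP1 hξ0 hα0 hh0 (ε := ε) (by rw [hε]; ring) hPε hNP hL0
    (logbNP_le hP1 hP0 hNP) hd (betaKS α ξ h n (p n)) (gammaKS α ξ h n (p n)) _ rfl rfl rfl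
  have hK : ⌈α * n / logbNP n (p n)⌉₊ + 1 ≤ n := by
    have h1 : α * n / logbNP n (p n) ≤ n / 2 := by
      rw [div_le_iff₀ hL0]
      nlinarith
    have h2 := Nat.ceil_lt_add_one (show 0 ≤ α * n / logbNP n (p n) by positivity)
    have h3 : ((⌈α * n / logbNP n (p n)⌉₊ + 1 : ℕ) : ℝ) ≤ n := by
      push_cast
      linarith
    exact_mod_cast h3
  refine le_trans ?_ (countKS hK hlog hnum)
  refine le_trans (measure_mono ?_) (unionKS hP0.le hP1.le (((n : ℝ) * p n) ^ (-h))
    (betaKS α ξ h n (p n) / 2) (h * logbNP n (p n)) (gammaKS α ξ h n (p n))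
    ((ξ / 10) * (α * n / logbNP n (p n))) (by positivity) (pow_ge_KS hP1 hP0 hNP))
  rintro ω ⟨C, hC, ℓ, -, -, hℓ, hγ, hM⟩
  refine ⟨C, hC, hγ, hM.trans ?_⟩
  refine Nat.cast_le.2 (Set.ncard_le_ncard ?_ (Set.toFinite _))
  intro i hi
  simp only [Set.mem_ofPred_eq] at hi ⊢
  linarith
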